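/- Define rational numbers b_{m,n} by b_{0,0} = 1, b_{m,n} = C(n−1, m−1)·Cat_m for 1 ≤ m ≤ n, and b_{m,n} = 0 otherwise, where Cat_m = C(2m, m)/(m+1) is the m-th Catalan number. Let H = Σ_{n≥0} (Σ_{m=0}^{n} b_{m,n}·s^m) tⁿ, regarded as a formal power series in t with coefficients in the polynomial ring ℚ[s]. Then (1 − t)·H = (1 − t) + s·t·H² in (ℚ[s])[[t]]. -/

import Mathlib

/-!
An edge of weight at least one contributes `w = s t / (1 - t)`, where `s` marks edges and `t` marks
weight. The coefficient of `tⁿ` in `w ^ m` is `C(n - 1, m - 1) sᵐ`, so `H = c(w)` for the Catalan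
series `c`. Substituting `w` into `c = 1 + u c²` gives `H = 1 + w H²`, and multiplying by `1 - t`
clears the denominator.
-/

section

open PowerSeries

lemma coeff_subst_eq_sum_range {R S : Type*} [CommRing R] [CommRing S] [Algebra R S]
    {a : S⟦X⟧} (ha : constantCoeff a = 0) (f : R⟦X⟧) (n : ℕ) :
    coeff n (f.subst a) = ∑ m ∈ Finset.range (n + 1), coeff m f • coeff n (a ^ m) := by
  rw [coeff_subst' (.of_constantCoeff_zero' ha)]
  refine finsum_eq_sum_of_support_subset _ fun m hm => ?_
  contrapose! hm
  have hnm : n < m := by simpa using hm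
  have hdvd : X ^ m ∣ a ^ m := pow_dvd_pow_of_dvd (X_dvd_iff.mpr ha) m
  simp [X_pow_dvd_iff.mp hdvd n hnm]

lemma cast_catalan_eq_choose_div {K : Type*} [DivisionRing K] [CharZero K] (n : ℕ) :
    (catalan n : K) = (Nat.choose (2 * n) n : K) / (n + 1) := by
  rw [eq_div_iff (by exact_mod_cast n.succ_ne_zero), ← Nat.centralBinom_eq_two_mul_choose,
    ← succ_mul_catalan_eq_centralBinom, mul_comm (n + 1)]
  push_cast
  rfl

variable {R : Type*} [CommRing R]

lemma subst_catalanSeries_eq_one_add {τ : Type*} {a : MvPowerSeries τ R} (ha : HasSubst a) :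
    (catalanSeries.map (Nat.castRingHom R)).subst a =
      1 + a * (catalanSeries.map (Nat.castRingHom R)).subst a ^ 2 := by
  have hcat : (catalanSeries.map (Nat.castRingHom R)) ^ 2 * X + 1 =
      catalanSeries.map (Nat.castRingHom R) := by
    simpa using congrArg (map (Nat.castRingHom R)) catalanSeries_sq_mul_X_add_one
  have hsubst := congrArg (substAlgHom ha) hcat
  rw [map_add, map_mul, map_pow, map_one, substAlgHom_X, coe_substAlgHom] at hsubst
  rw [add_comm, mul_comm, hsubst]

/-- The series `s t / (1 - t) = s t + s t² + ⋯` of a single weighted edge, with `s` marking the edge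
and `t = X` its weight. The factor `1 / (1 - t)` is written `mk 1`, as `R` need not be a field. -/
noncomputable def weightedEdgeSeries (s : R) : R⟦X⟧ := C s * X * mk 1

lemma one_sub_X_mul_weightedEdgeSeries (s : R) : (1 - X) * weightedEdgeSeries s = C s * X := by
  rw [weightedEdgeSeries, mul_comm, mul_assoc, mk_one_mul_one_sub_eq_one, mul_one]

lemma constantCoeff_weightedEdgeSeries (s : R) : constantCoeff (weightedEdgeSeries s) = 0 := by
  simp [weightedEdgeSeries]

lemma coeff_weightedEdgeSeries_pow (s : R) {m n : ℕ} (hm : 1 ≤ m) (hmn : m ≤ n) :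
    coeff n (weightedEdgeSeries s ^ m) = ((n - 1).choose (m - 1) : R) * s ^ m := by
  obtain ⟨d, rfl⟩ := Nat.exists_eq_add_of_le' hm
  have hpow : weightedEdgeSeries s ^ (d + 1) =
      C (s ^ (d + 1)) * (X ^ (d + 1) * mk fun k => ((d + k).choose d : R)) := by
    rw [weightedEdgeSeries, mul_pow, mul_pow, mk_one_pow_eq_mk_choose_add, map_pow, mul_assoc]
  have hindex : d + (n - (d + 1)) = n - 1 := by lia
  rw [hpow, coeff_C_mul, coeff_X_pow_mul', if_pos hmn, coeff_mk, hindex, mul_comm,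
    Nat.add_sub_cancel]

lemma mk_sum_eq_subst_catalanSeries (b : ℕ → ℕ → R) (s : R) (hb00 : b 0 0 = 1)
    (hb : ∀ m n : ℕ, 1 ≤ m → m ≤ n → b m n = ((n - 1).choose (m - 1) : R) * catalan m)
    (hb0 : ∀ n : ℕ, 1 ≤ n → b 0 n = 0) :
    mk (fun n => ∑ m ∈ Finset.range (n + 1), b m n * s ^ m) =
      (catalanSeries.map (Nat.castRingHom R)).subst (weightedEdgeSeries s) := by
  ext n
  rw [coeff_mk, coeff_subst_eq_sum_range (constantCoeff_weightedEdgeSeries s)]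
  refine Finset.sum_congr rfl fun m hm => ?_
  have hmn : m ≤ n := Finset.mem_range_succ_iff.mp hm
  rw [coeff_map, catalanSeries_coeff, Nat.coe_castRingHom, smul_eq_mul]
  rcases m.eq_zero_or_pos with rfl | hm_pos
  · rcases n.eq_zero_or_pos with rfl | hn_pos
    · simp [hb00]
    · simp [hb0 n hn_pos, coeff_one, hn_pos.ne']
  · rw [hb m n hm_pos hmn, coeff_weightedEdgeSeries_pow s hm_pos hmn]
    ring

theorem stmt14_general (b : ℕ → ℕ → R) (s : R) (hb00 : b 0 0 = 1)
    (hb : ∀ m n : ℕ, 1 ≤ m → m ≤ n → b m n = ((n - 1).choose (m - 1) : R) * catalan m)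
    (hb0 : ∀ n : ℕ, 1 ≤ n → b 0 n = 0) :
    (1 - X) * mk (fun n => ∑ m ∈ Finset.range (n + 1), b m n * s ^ m) =
      (1 - X) + C s * X * mk (fun n => ∑ m ∈ Finset.range (n + 1), b m n * s ^ m) ^ 2 := by
  have hsubst : HasSubst (weightedEdgeSeries s) :=
    .of_constantCoeff_zero' (constantCoeff_weightedEdgeSeries s)
  have hquad := subst_catalanSeries_eq_one_add hsubst
  rw [← mk_sum_eq_subst_catalanSeries b s hb00 hb hb0] at hquad
  set H := mk fun n => ∑ m ∈ Finset.range (n + 1), b m n * s ^ m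
  calc (1 - X) * H = (1 - X) * (1 + weightedEdgeSeries s * H ^ 2) := congrArg _ hquad
    _ = (1 - X) + (1 - X) * weightedEdgeSeries s * H ^ 2 := by ring
    _ = (1 - X) + C s * X * H ^ 2 := by rw [one_sub_X_mul_weightedEdgeSeries]

end

/-- Functional equation for the two-variable generating function of edge-rooted
weighted bicolored plane trees by weight and number of edges:
`(1 - t)·H = (1 - t) + s·t·H²` in `(ℚ[s])[[t]]`. -/
theorem stmt14 (b : ℕ → ℕ → ℚ) (hb00 : b 0 0 = 1)
    (hb : ∀ m n : ℕ, 1 ≤ m → m ≤ n →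
      b m n = (Nat.choose (n - 1) (m - 1) : ℚ) * ((Nat.choose (2 * m) m : ℚ) / (m + 1)))
    (hb0 : ∀ m n : ℕ, ¬(m = 0 ∧ n = 0) → ¬(1 ≤ m ∧ m ≤ n) → b m n = 0) :
    (1 - PowerSeries.X) *
        PowerSeries.mk (fun n =>
          ∑ m ∈ Finset.range (n + 1), Polynomial.C (b m n) * Polynomial.X ^ m)
      = (1 - PowerSeries.X) +
        PowerSeries.C (R := Polynomial ℚ) Polynomial.X * PowerSeries.X *
          (PowerSeries.mk (fun n =>
            ∑ m ∈ Finset.range (n + 1), Polynomial.C (b m n) * Polynomial.X ^ m)) ^ 2 := by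
  exact stmt14_general (fun m n => Polynomial.C (b m n)) Polynomial.X (by simp [hb00])
    (fun m n hm hmn => by simp [hb m n hm hmn, ← cast_catalan_eq_choose_div])
    (fun n hn => by simp [hb0 0 n (by lia) (by lia)])
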